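/- Let (S(n), F(n)) be a centered martingale satisfying sup_n P(|S(n)|/σ(n) > x) ≤ exp(−c x^r) for all x > 0 with c₁ n^γ ≤ σ(n) ≤ c₂ n^γ, γ, r > 0, and set v_r(n) = (log log(n+3))^{1/r}. Then with probability one, limsup_{n→∞} S(n)/(σ(n) v_r(n)) ≤ C for some finite deterministic constant C. -/

import Mathlib

open MeasureTheory ProbabilityTheory Real Filter

lemma aux_det (B r : ℝ) (hB : 0 < B) (hr : 0 < r) (n : ℕ) (hn : 3 ≤ Real.log ((n:ℝ)+3)) (hn1 : 1 ≤ n) :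
    (B * Real.log ((Nat.log 2 n : ℝ) + 3)) ^ (1/r) ≤
      (2 * B) ^ (1/r) * (Real.log (Real.log ((n:ℝ)+3))) ^ (1/r) := by
  set k := Nat.log 2 n
  have hk : (2:ℝ)^k ≤ n := by exact_mod_cast Nat.pow_log_le_self 2 (by omega)
  have h1 : (k:ℝ) * Real.log 2 ≤ Real.log ((n:ℝ)+3) := by
    rw [← Real.log_pow]
    exact Real.log_le_log (by positivity) (by linarith)
  have h2 := Real.log_two_gt_d9
  have hk0 : (0:ℝ) ≤ k := by positivity
  set L := Real.log ((n:ℝ)+3)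
  have h3 : (k:ℝ) + 3 ≤ L ^ 2 := by nlinarith
  have h4 : Real.log ((k:ℝ)+3) ≤ 2 * Real.log L := by
    have := Real.log_le_log (by positivity) h3
    rw [Real.log_pow] at this
    simpa using this
  have h5 : 0 ≤ Real.log L := Real.log_nonneg (by linarith)
  have h6 : 0 ≤ Real.log ((k:ℝ)+3) := Real.log_nonneg (by linarith)
  rw [← Real.mul_rpow (by positivity) h5]
  apply Real.rpow_le_rpow (by positivity) _ (by positivity)
  nlinarith

lemma aux_sigma (σ : ℕ → ℝ) (c₁ c₂ γ : ℝ) (hc₁ : 0 < c₁) (hc₂ : 0 < c₂) (hγ : 0 < γ)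
    (hσbound : ∀ n : ℕ, 1 ≤ n → c₁ * (n : ℝ) ^ γ ≤ σ n ∧ σ n ≤ c₂ * (n : ℝ) ^ γ)
    (n : ℕ) (hn : 1 ≤ n) : σ (2 ^ (Nat.log 2 n + 1)) ≤ c₂ / c₁ * 2 ^ γ * σ n := by
  set k := Nat.log 2 n
  have hk : (2:ℝ)^k ≤ n := by exact_mod_cast Nat.pow_log_le_self 2 (by omega)
  have h1 := (hσbound (2^(k+1)) Nat.one_le_two_pow).2
  have h2 := (hσbound n hn).1
  have h3 : (((2^(k+1) : ℕ)):ℝ) ^ γ ≤ 2 ^ γ * (n:ℝ) ^ γ := by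
    rw [← Real.mul_rpow (by positivity) (by positivity)]
    apply Real.rpow_le_rpow (by positivity) _ hγ.le
    push_cast
    rw [pow_succ]; linarith
  calc _ ≤ _ := h1
    _ ≤ c₂ * (2 ^ γ * (n:ℝ) ^ γ) := by gcongr
    _ = c₂ / c₁ * 2 ^ γ * (c₁ * (n:ℝ)^γ) := by field_simp
    _ ≤ _ := by gcongr

lemma aux_max {Ω : Type*} {m : MeasurableSpace Ω} (μ : Measure Ω) [IsProbabilityMeasure μ]
    (ℱ : MeasureTheory.Filtration ℕ m) (S : ℕ → Ω → ℝ) (hmart : MeasureTheory.Martingale S ℱ μ)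
    (N : ℕ) (s x ε : ℝ) (hs : 0 < s) (hx : 0 < x) (hε : 0 < ε)
    (hint : Integrable (fun ω => S N ω ^ 2) μ) (hvar : ∫ ω, S N ω ^ 2 ∂μ = s ^ 2)
    (htail : μ.real {ω | |S N ω| / s > x} ≤ ε ^ 2) :
    μ {ω | ∃ n ≤ N, 2 * s * x ≤ S n ω} ≤ ENNReal.ofReal (ε / x) := by
  have hmeas : Measurable (S N) := ((hmart.1 N).measurable).mono (ℱ.le N) le_rfl
  set A : Set Ω := {ω | |S N ω| / s > x} with hA
  have hAm : MeasurableSet A := measurableSet_lt measurable_const (by fun_prop)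
  have hsub : Submartingale (fun n ω => max (S n ω - s * x) 0) ℱ μ :=
    (hmart.submartingale.sub_martingale (martingale_const ℱ μ (s * x))).pos
  have hmi := maximal_ineq hsub (fun n ω => le_max_right _ _) (ε := ⟨s * x, by positivity⟩) N
  have hpt : ∀ ω, max (S N ω - s * x) 0 ≤
      (ε / (2 * s)) * S N ω ^ 2 + A.indicator (fun _ => s / (2 * ε)) ω := by
    intro ω
    by_cases h : ω ∈ A
    · rw [Set.indicator_of_mem h]
      apply max_le
      · have : S N ω ≤ (ε / (2 * s)) * S N ω ^ 2 + s / (2 * ε) := by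
          have e : (ε / (2 * s)) * S N ω ^ 2 + s / (2 * ε) - S N ω
            = (ε * S N ω - s) ^ 2 / (2 * s * ε) := by field_simp; ring
          have : 0 ≤ (ε * S N ω - s) ^ 2 / (2 * s * ε) := by positivity
          linarith
        have : 0 < s * x := by positivity
        linarith
      · positivity
    · rw [Set.indicator_of_notMem h]
      have h' : |S N ω| ≤ x * s := by
        rw [hA, Set.mem_ofPred_eq, not_lt, div_le_iff₀ hs] at h; exact h
      have := le_abs_self (S N ω)
      apply max_le
      · have : 0 ≤ (ε / (2 * s)) * S N ω ^ 2 + 0 := by positivity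
        linarith
      · positivity
  have hI : ∫ ω, max (S N ω - s * x) 0 ∂μ ≤ ε * s := by
    have hi2 : Integrable (A.indicator (fun _ => s / (2 * ε))) μ :=
      (integrable_const _).indicator hAm
    calc _ ≤ ∫ ω, ((ε / (2 * s)) * S N ω ^ 2 + A.indicator (fun _ => s / (2 * ε)) ω) ∂μ :=
          integral_mono (hsub.integrable N) ((hint.const_mul _).add hi2) hpt
      _ = (ε / (2 * s)) * s ^ 2 + μ.real A * (s / (2 * ε)) := by
          rw [integral_add (hint.const_mul _) hi2, integral_const_mul, hvar,
            integral_indicator_const _ hAm, smul_eq_mul]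
      _ ≤ (ε / (2 * s)) * s ^ 2 + ε ^ 2 * (s / (2 * ε)) := by gcongr
      _ = ε * s := by field_simp; ring
  set M : Set Ω := {ω | ((⟨s * x, by positivity⟩ : NNReal) : ℝ) ≤
    (Finset.range (N + 1)).sup' Finset.nonempty_range_add_one
      fun k => (fun n ω => max (S n ω - s * x) 0) k ω} with hM
  have hincl : {ω | ∃ n ≤ N, 2 * s * x ≤ S n ω} ⊆ M := by
    rintro ω ⟨n, hn, h⟩
    rw [hM, Set.mem_ofPred_eq, Finset.le_sup'_iff]
    refine ⟨n, by simpa [Nat.lt_succ_iff] using hn, le_max_of_le_left ?_⟩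
    change s * x ≤ _
    linarith
  have hle : ∫ ω in M, max (S N ω - s * x) 0 ∂μ ≤ ε * s :=
    (setIntegral_le_integral (hsub.integrable N) (ae_of_all _ fun ω => le_max_right _ _)).trans hI
  have h1 : ENNReal.ofReal (s * x) * μ M ≤ ENNReal.ofReal (ε * s) := by
    rw [ENNReal.ofReal_eq_coe_nnreal (by positivity : 0 ≤ s * x)]
    exact hmi.trans (ENNReal.ofReal_le_ofReal hle)
  refine (measure_mono hincl).trans ?_
  have h3 : ε / x = ε * s / (s * x) := by field_simp
  rw [h3, ENNReal.ofReal_div_of_pos (by positivity)]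
  rw [ENNReal.le_div_iff_mul_le (Or.inl (ENNReal.ofReal_pos.2 (by positivity)).ne') (Or.inl ENNReal.ofReal_ne_top), mul_comm]
  exact h1

theorem stmt_9
    {Ω : Type*} [MeasureSpace Ω] [IsProbabilityMeasure (ℙ : Measure Ω)]
    (ℱ : MeasureTheory.Filtration ℕ (by infer_instance : MeasurableSpace Ω))
    (S : ℕ → Ω → ℝ)
    (hmart : MeasureTheory.Martingale S ℱ ℙ)
    (hcent : ∀ n, ∫ ω, S n ω = 0)
    (σ : ℕ → ℝ)
    (hσdef : ∀ n, σ n = Real.sqrt (ProbabilityTheory.variance (S n) ℙ))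
    (hσpos : ∀ n, 0 < σ n)
    (hσmono : Monotone σ)
    (r c c₁ c₂ γ : ℝ) (hr : 0 < r) (hc : 0 < c) (hc₁ : 0 < c₁) (hc₂ : 0 < c₂) (hγ : 0 < γ)
    (htail : ∀ n, ∀ x : ℝ, 0 < x →
      (ℙ {ω | |S n ω| / σ n > x}).toReal ≤ Real.exp (- c * x ^ r))
    (hσbound : ∀ n : ℕ, 1 ≤ n → c₁ * (n : ℝ) ^ γ ≤ σ n ∧ σ n ≤ c₂ * (n : ℝ) ^ γ) :
    ∃ C : ℝ, ∀ᵐ ω ∂(ℙ : Measure Ω),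
      Filter.limsup (fun n : ℕ =>
        S n ω / (σ n * (Real.log (Real.log ((n : ℝ) + 3))) ^ (1 / r))) atTop ≤ C := by
  set B : ℝ := 4 / c with hBdef
  have hB : 0 < B := by positivity
  set X : ℕ → ℝ := fun k => (B * Real.log ((k:ℝ) + 3)) ^ (1/r) with hX
  have hlog : ∀ k : ℕ, 1 ≤ Real.log ((k:ℝ) + 3) := by
    intro k
    rw [Real.le_log_iff_exp_le (by positivity)]
    have := Real.exp_one_lt_d9
    have : (0:ℝ) ≤ k := by positivity
    linarith
  have hX0 : ∀ k, B ^ (1/r) ≤ X k := fun k =>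
    Real.rpow_le_rpow hB.le (by nlinarith [hlog k]) (by positivity)
  have hb0 : 0 < B ^ (1/r) := by positivity
  have hXr : ∀ k, X k ^ r = B * Real.log ((k:ℝ) + 3) := by
    intro k
    have := hlog k
    rw [hX]
    simp only
    rw [← Real.rpow_mul (by positivity), one_div_mul_cancel hr.ne', Real.rpow_one]
  have hL2 : ∀ n, MemLp (S n) 2 (ℙ : Measure Ω) := by
    intro n
    by_contra h
    have h1 := evariance_eq_top (hmart.integrable n).aestronglyMeasurable h
    have h2 := hσpos n
    rw [hσdef, variance, h1] at h2
    simp at h2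
  have hvar : ∀ n, ∫ ω, S n ω ^ 2 = σ n ^ 2 := by
    intro n
    rw [hσdef, Real.sq_sqrt (variance_nonneg _ _),
      variance_of_integral_eq_zero (hmart.integrable n).aemeasurable (hcent n)]
  set E : ℕ → Set Ω := fun k =>
    {ω | ∃ n ≤ 2 ^ (k+1), 2 * σ (2 ^ (k+1)) * X k ≤ S n ω} with hE
  have hEb : ∀ k, (ℙ : Measure Ω) (E k) ≤
      ENNReal.ofReal ((1 / ((k + 3 : ℕ) : ℝ) ^ 2) / B ^ (1/r)) := by
    intro k
    have hXp : 0 < X k := hb0.trans_le (hX0 k)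
    have h := aux_max (ℙ : Measure Ω) ℱ S hmart (2 ^ (k+1)) (σ (2 ^ (k+1))) (X k)
      (1 / ((k + 3 : ℕ) : ℝ) ^ 2) (hσpos _) hXp (by positivity)
      (hL2 _).integrable_sq (hvar _) (by
        refine (htail (2 ^ (k+1)) (X k) hXp).trans (le_of_eq ?_)
        rw [hXr, hBdef]
        have e : -c * (4 / c * Real.log ((k:ℝ) + 3)) = -(((4:ℕ):ℝ) * Real.log ((k:ℝ) + 3)) := by
          push_cast
          field_simp
        rw [e, Real.exp_neg, ← Real.log_pow, Real.exp_log (by positivity)]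
        push_cast
        field_simp)
    refine h.trans (ENNReal.ofReal_le_ofReal ?_)
    gcongr
    exact hX0 k
  have hsum : ∑' k, (ℙ : Measure Ω) (E k) ≠ ⊤ := by
    have hs : Summable (fun k : ℕ => (1 / ((k + 3 : ℕ) : ℝ) ^ 2) / B ^ (1/r)) :=
      ((summable_nat_add_iff 3).2
        (Real.summable_one_div_nat_pow.2 (by norm_num : 1 < 2))).div_const _
    exact ne_top_of_le_ne_top hs.tsum_ofReal_ne_top (ENNReal.tsum_le_tsum hEb)
  refine ⟨2 * (c₂ / c₁ * 2 ^ γ) * (2 * B) ^ (1/r), ?_⟩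
  filter_upwards [ae_eventually_notMem hsum] with ω hω
  have hlogtend : Tendsto (fun n : ℕ => Real.log ((n:ℝ) + 3)) atTop atTop :=
    Real.tendsto_log_atTop.comp (tendsto_atTop_add_const_right _ _ tendsto_natCast_atTop_atTop)
  have hklog : Tendsto (fun n : ℕ => Nat.log 2 n) atTop atTop := by
    refine tendsto_atTop.2 fun b => ?_
    filter_upwards [eventually_ge_atTop (2 ^ b)] with n hn
    exact Nat.le_log_of_pow_le (by norm_num) hn
  have hev : ∀ᶠ n : ℕ in atTop,
      S n ω / (σ n * (Real.log (Real.log ((n : ℝ) + 3))) ^ (1 / r)) ≤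
        2 * (c₂ / c₁ * 2 ^ γ) * (2 * B) ^ (1/r) := by
    filter_upwards [hklog.eventually hω, hlogtend.eventually_ge_atTop 3,
      eventually_ge_atTop 1] with n h1 h2 h3
    have hv : 0 < Real.log (Real.log ((n : ℝ) + 3)) := Real.log_pos (by linarith)
    have hv' : 0 < (Real.log (Real.log ((n : ℝ) + 3))) ^ (1 / r) := by positivity
    have hσn := hσpos n
    rw [div_le_iff₀ (by positivity)]
    have h4 : S n ω < 2 * σ (2 ^ (Nat.log 2 n + 1)) * X (Nat.log 2 n) := by
      by_contra hcon
      exact h1 ⟨n, (Nat.lt_pow_succ_log_self (by norm_num) n).le, not_lt.1 hcon⟩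
    have h5 := aux_sigma σ c₁ c₂ γ hc₁ hc₂ hγ hσbound n h3
    have h6 := aux_det B r hB hr n h2 h3
    have hXp : 0 < X (Nat.log 2 n) := hb0.trans_le (hX0 _)
    calc S n ω ≤ 2 * σ (2 ^ (Nat.log 2 n + 1)) * X (Nat.log 2 n) := h4.le
      _ ≤ 2 * (c₂ / c₁ * 2 ^ γ * σ n) *
          ((2 * B) ^ (1/r) * (Real.log (Real.log ((n:ℝ)+3))) ^ (1/r)) := by
        gcongr
      _ = _ := by ring
  rw [limsup_eq]
  by_cases hbdd : BddBelow {a | ∀ᶠ n : ℕ in atTop,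
      S n ω / (σ n * (Real.log (Real.log ((n : ℝ) + 3))) ^ (1 / r)) ≤ a}
  · exact csInf_le hbdd hev
  · rw [Real.sInf_of_not_bddBelow hbdd]
    positivity
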